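/- arXiv:2503.16002 — 4 statements merged into one kernel-verified Lean document; each statement's English description precedes it below -/
import Mathlib

section
/- Every delivery instance admits an allocation that is simultaneously non-wasteful and egalitarian optimal. -/
/-- A delivery instance: a finite tree rooted at the hub (encoded by a parent
function `par`; the edges of the tree are the pairs `{v, par v}` for `v ≠ hub`),
positive edge weights (`w v` is the weight of the edge between `v` and its
parent, for `v ≠ hub`), and `n` agents. -/
structure DeliveryInstance where
  V : Type
  fintypeV : Fintype V
  decEqV : DecidableEq V
  hub : V
  par : V → V
  w : V → ℝ
  par_hub : par hub = hub
  reaches_hub : ∀ v : V, ∃ k : ℕ, par^[k] v = hub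
  w_pos : ∀ v : V, v ≠ hub → 0 < w v
  n : ℕ
  n_pos : 0 < n

attribute [instance] DeliveryInstance.fintypeV DeliveryInstance.decEqV

namespace DeliveryInstance

variable (I : DeliveryInstance)

/-- `u` lies on the path from the hub to `v` (equivalently, `u` is a weak
ancestor of `v` in the tree rooted at the hub). -/
def Anc (u v : I.V) : Prop := ∃ k : ℕ, I.par^[k] v = u

/-- A leaf of the tree rooted at the hub: a vertex with no children. -/
def IsLeaf (v : I.V) : Prop := ∀ u : I.V, I.par u = v → u = v

/-- The set of leaves of the topology. -/
def leaves : Set I.V := {v : I.V | I.IsLeaf v}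

/-- The instance is unweighted if every edge has weight 1. -/
def Unweighted : Prop := ∀ v : I.V, v ≠ I.hub → I.w v = 1

/-- The cost of servicing a set `A` of orders: the total weight of the edges of
the tree that lie on the path from the hub to some vertex of `A` (the edge
between `u ≠ hub` and its parent lies on such a path iff `u` is a weak ancestor
of a member of `A`).  In particular `cost ∅ = 0`. -/
noncomputable def cost (A : Set I.V) : ℝ :=
  ∑ u : I.V, Set.indicator {u : I.V | u ≠ I.hub ∧ ∃ v ∈ A, I.Anc u v} I.w u

/-- The bundle of agent `i` under allocation `π`: the set of orders serviced by `i`. -/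
def bundle (π : I.V → Fin I.n) (i : Fin I.n) : Set I.V :=
  {v : I.V | v ≠ I.hub ∧ π v = i}

/-- An allocation is non-wasteful if every order `v` is serviced by an agent
that also services some leaf of the subtree rooted at `v`. -/
def NonWasteful (π : I.V → Fin I.n) : Prop :=
  ∀ v : I.V, v ≠ I.hub → ∃ l : I.V, I.IsLeaf l ∧ I.Anc v l ∧ π l = π v

/-- Total (utilitarian) cost of an allocation. -/
noncomputable def totalCost (π : I.V → Fin I.n) : ℝ :=
  ∑ i : Fin I.n, I.cost (I.bundle π i)

/-- The maximum bundle cost of an allocation. -/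
noncomputable def maxCost (π : I.V → Fin I.n) : ℝ :=
  Finset.univ.sup' ⟨⟨0, I.n_pos⟩, Finset.mem_univ _⟩ fun i : Fin I.n => I.cost (I.bundle π i)

/-- The minimax (MMS) share of the instance: the minimum over all allocations
of the maximum bundle cost. -/
noncomputable def MMSshare : ℝ :=
  Finset.univ.inf' ⟨fun _ => ⟨0, I.n_pos⟩, Finset.mem_univ _⟩
    fun π : I.V → Fin I.n => I.maxCost π

/-- An allocation is MMS if every bundle costs at most the MMS share. -/
def IsMMS (π : I.V → Fin I.n) : Prop :=
  ∀ i : Fin I.n, I.cost (I.bundle π i) ≤ I.MMSshare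

/-- Pareto optimality: no allocation makes every agent weakly better off and
some agent strictly better off. -/
def ParetoOptimal (π : I.V → Fin I.n) : Prop :=
  ¬ ∃ π' : I.V → Fin I.n,
      (∀ i : Fin I.n, I.cost (I.bundle π' i) ≤ I.cost (I.bundle π i)) ∧
      ∃ j : Fin I.n, I.cost (I.bundle π' j) < I.cost (I.bundle π j)

/-- Utilitarian optimality: minimizes the sum of bundle costs. -/
def UtilitarianOptimal (π : I.V → Fin I.n) : Prop :=
  ∀ π' : I.V → Fin I.n, I.totalCost π ≤ I.totalCost π'

/-- Egalitarian optimality: minimizes the maximum bundle cost. -/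
def EgalitarianOptimal (π : I.V → Fin I.n) : Prop :=
  ∀ π' : I.V → Fin I.n, I.maxCost π ≤ I.maxCost π'

/-- Envy-freeness. -/
def EF (π : I.V → Fin I.n) : Prop :=
  ∀ i j : Fin I.n, I.cost (I.bundle π i) ≤ I.cost (I.bundle π j)

/-- Envy-freeness up to one order. -/
def EF1 (π : I.V → Fin I.n) : Prop :=
  ∀ i j : Fin I.n,
    I.bundle π i = ∅ ∨ ∃ v ∈ I.bundle π i, I.cost (I.bundle π i \ {v}) ≤ I.cost (I.bundle π j)

end DeliveryInstance

namespace DeliveryInstance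

/-- Below every vertex there is a leaf. -/
theorem exists_leaf_below (I : DeliveryInstance) (v : I.V) :
    ∃ l : I.V, I.IsLeaf l ∧ I.Anc v l := by
  classical
  obtain ⟨l, hl, hmax⟩ := Finset.exists_max_image
    (Finset.univ.filter fun l : I.V => I.Anc v l) (fun l => Nat.find (I.reaches_hub l))
    ⟨v, by simpa using ⟨0, rfl⟩⟩
  have hl' : I.Anc v l := by simpa using hl
  refine ⟨l, ?_, hl'⟩
  intro u hu
  by_contra hne
  obtain ⟨k, hk⟩ := hl'
  have hanc : I.Anc v u := ⟨k + 1, by rw [Function.iterate_succ_apply, hu, hk]⟩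
  have h1 := hmax u (by simpa using hanc)
  have hspec := Nat.find_spec (I.reaches_hub u)
  rcases hd : Nat.find (I.reaches_hub u) with _ | d
  · rw [hd] at hspec
    have huh : u = I.hub := hspec
    apply hne
    rw [← hu, huh, I.par_hub]
  · rw [hd, Function.iterate_succ_apply, hu] at hspec
    have h2 := Nat.find_min' (I.reaches_hub l) hspec
    simp only [hd] at h1
    omega

/-- A leaf has no descendant other than itself. -/
theorem IsLeaf.eq_of_anc {I : DeliveryInstance} {v l : I.V} (hv : I.IsLeaf v)
    (h : I.Anc v l) : l = v := by
  obtain ⟨k, hk⟩ := h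
  induction k with
  | zero => exact hk
  | succ k ih =>
    rw [Function.iterate_succ_apply'] at hk
    exact ih (hv _ hk)

theorem Anc.trans {I : DeliveryInstance} {a b c : I.V} (h : I.Anc a b) (h' : I.Anc b c) :
    I.Anc a c := by
  obtain ⟨k, rfl⟩ := h
  obtain ⟨m, rfl⟩ := h'
  exact ⟨k + m, Function.iterate_add_apply _ _ _ _⟩

theorem Anc.ne_hub {I : DeliveryInstance} {v l : I.V} (h : I.Anc v l) (hv : v ≠ I.hub) :
    l ≠ I.hub := by
  rintro rfl
  obtain ⟨k, hk⟩ := h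
  exact hv (hk.symm.trans (Function.iterate_fixed I.par_hub k))

theorem cost_le_of_anc (I : DeliveryInstance) {A B : Set I.V}
    (h : ∀ v ∈ A, ∃ l ∈ B, I.Anc v l) : I.cost A ≤ I.cost B := by
  unfold cost
  refine Finset.sum_le_sum fun u _ => ?_
  by_cases hu : u = I.hub
  · subst hu
    simp
  · refine Set.indicator_le_indicator_apply_of_subset ?_ (I.w_pos u hu).le
    rintro x ⟨hx, v, hv, hxv⟩
    obtain ⟨l, hl, hvl⟩ := h v hv
    exact ⟨hx, l, hl, hxv.trans hvl⟩

end DeliveryInstance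

/-- Every delivery instance admits an allocation that is both
non-wasteful and egalitarian optimal. -/
theorem stmt5 (I : DeliveryInstance) :
    ∃ π : I.V → Fin I.n, I.NonWasteful π ∧ I.EgalitarianOptimal π := by
  classical
  obtain ⟨p, -, hp⟩ := Finset.exists_min_image (Finset.univ : Finset (I.V → Fin I.n))
    (fun q => I.maxCost q) ⟨fun _ => ⟨0, I.n_pos⟩, Finset.mem_univ _⟩
  choose f hleaf hanc using I.exists_leaf_below
  refine ⟨fun v => p (f v), ?_, ?_⟩
  · intro v _
    refine ⟨f v, hleaf v, hanc v, ?_⟩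
    show p (f (f v)) = p (f v)
    rw [(hleaf v).eq_of_anc (hanc (f v))]
  · intro q
    refine le_trans ?_ (hp q (Finset.mem_univ _))
    unfold DeliveryInstance.maxCost
    refine Finset.sup'_mono_fun fun i _ => I.cost_le_of_anc ?_
    rintro v ⟨hv, hvi⟩
    exact ⟨f v, ⟨(hanc v).ne_hub hv, hvi⟩, hanc v⟩
end

section
/- Let k, B ∈ ℕ and let a_1,…,a_{2k} be positive integers with Σ_{i=1}^{2k} a_i = 2B such that every subset S ⊆ {1,…,2k} with |S| < k satisfies Σ_{i∈S} a_i < B. Let I be the delivery instance with exactly 2 agents whose topology is a star with center the hub h and with one order v_i joined to h by an edge of weight a_i for each i ∈ [2k]. Then MMS(I) ≤ B if and only if there exists S ⊆ {1,…,2k} with |S| = k and Σ_{i∈S} a_i = B. -/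
/-- In a star, the cost of a bundle is the sum of the weights of its orders. -/
theorem star_cost (k : ℕ) (a : Fin (2 * k) → ℕ) (I : DeliveryInstance)
    (e : {v : I.V // v ≠ I.hub} ≃ Fin (2 * k))
    (hstar : ∀ v : I.V, v ≠ I.hub → I.par v = I.hub)
    (hw : ∀ v : {v : I.V // v ≠ I.hub}, I.w v.1 = (a (e v) : ℝ))
    (π : I.V → Fin I.n) (i : Fin I.n) :
    I.cost (I.bundle π i) =
      ((∑ j ∈ Finset.univ.filter (fun j => π (e.symm j).1 = i), a j : ℕ) : ℝ) := by
  classical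
  have hhub : ∀ m : ℕ, I.par^[m] I.hub = I.hub := fun m =>
    Function.iterate_fixed I.par_hub m
  have hset : {u : I.V | u ≠ I.hub ∧ ∃ v ∈ I.bundle π i, I.Anc u v} =
      {u : I.V | u ≠ I.hub ∧ π u = i} := by
    ext u
    constructor
    · rintro ⟨hu, v, ⟨hv, hvi⟩, m, hm⟩
      refine ⟨hu, ?_⟩
      cases m with
      | zero =>
        have : v = u := hm
        rw [← this]; exact hvi
      | succ m =>
        rw [Function.iterate_succ_apply, hstar v hv, hhub] at hm
        exact absurd hm.symm hu
    · rintro ⟨hu, hui⟩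
      exact ⟨hu, u, ⟨hu, hui⟩, 0, rfl⟩
  unfold DeliveryInstance.cost
  rw [hset, Finset.sum_filter]
  push_cast
  rw [← Equiv.sum_comp e]
  have h1 : ∀ v : {v : I.V // v ≠ I.hub},
      ((if π (e.symm (e v)).1 = i then (a (e v) : ℝ) else 0)) =
      Set.indicator {u : I.V | u ≠ I.hub ∧ π u = i} I.w v.1 := by
    intro v
    rw [Equiv.symm_apply_apply, ← hw v]
    by_cases h : π v.1 = i
    · rw [if_pos h, Set.indicator_of_mem]
      exact ⟨v.2, h⟩
    · rw [if_neg h, Set.indicator_of_notMem]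
      exact fun h' => h h'.2
  rw [Finset.sum_congr rfl (fun v _ => h1 v)]
  rw [← Finset.sum_subtype (Finset.univ.filter (fun v => v ≠ I.hub)) (by simp)
    (Set.indicator {u : I.V | u ≠ I.hub ∧ π u = i} I.w)]
  symm
  apply Finset.sum_subset (Finset.subset_univ _)
  intro v _ hv
  rw [Set.indicator_of_notMem]
  intro h
  exact hv (by simpa using h.1)

/-- Let `a₁, …, a_{2k}` be positive integers summing to `2B`
such that every subset of fewer than `k` indices has sum `< B`, and let `I` be
the 2-agent instance whose topology is a star centered at the hub with one
order per `i ∈ [2k]` attached by an edge of weight `aᵢ`.  Then `MMS(I) ≤ B` iff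
there is a `k`-element subset of indices whose elements sum to `B`. -/
theorem stmt14 (k B : ℕ) (a : Fin (2 * k) → ℕ)
    (hpos : ∀ i, 0 < a i) (hsum : ∑ i, a i = 2 * B)
    (hsmall : ∀ S : Finset (Fin (2 * k)), S.card < k → ∑ i ∈ S, a i < B)
    (I : DeliveryInstance) (h2 : I.n = 2)
    (e : {v : I.V // v ≠ I.hub} ≃ Fin (2 * k))
    (hstar : ∀ v : I.V, v ≠ I.hub → I.par v = I.hub)
    (hw : ∀ v : {v : I.V // v ≠ I.hub}, I.w v.1 = (a (e v) : ℝ)) :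
    I.MMSshare ≤ (B : ℝ) ↔
      ∃ S : Finset (Fin (2 * k)), S.card = k ∧ ∑ i ∈ S, a i = B := by
  classical
  have hM : I.MMSshare ≤ (B : ℝ) ↔ ∃ π : I.V → Fin I.n, ∀ i,
      ∑ j ∈ Finset.univ.filter (fun j => π (e.symm j).1 = i), a j ≤ B := by
    unfold DeliveryInstance.MMSshare DeliveryInstance.maxCost
    refine (Finset.inf'_le_iff (s := Finset.univ) (H := Finset.univ_nonempty_iff.2 ⟨fun _ => ⟨0, I.n_pos⟩⟩)).trans ?_
    constructor
    · rintro ⟨π, -, h⟩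
      refine ⟨π, fun i => ?_⟩
      have := (Finset.sup'_le_iff _ _).1 h i (Finset.mem_univ _)
      rw [star_cost k a I e hstar hw] at this
      exact_mod_cast this
    · rintro ⟨π, h⟩
      refine ⟨π, Finset.mem_univ _, (Finset.sup'_le_iff _ _).2 fun i _ => ?_⟩
      rw [star_cost k a I e hstar hw]
      exact_mod_cast h i
  rw [hM]
  have key : ∀ S : Finset (Fin (2 * k)), ∑ j ∈ S, a j + ∑ j ∈ Sᶜ, a j = 2 * B := fun S => by
    rw [Finset.sum_add_sum_compl, hsum]
  have hn0 : 0 < I.n := by omega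
  have hn1 : 1 < I.n := by omega
  constructor
  · rintro ⟨π, hπ⟩
    have h0 := hπ ⟨0, hn0⟩
    have h1 := hπ ⟨1, hn1⟩
    set S := Finset.univ.filter (fun j => π (e.symm j).1 = ⟨0, hn0⟩) with hS
    have hc : Finset.univ.filter (fun j => π (e.symm j).1 = ⟨1, hn1⟩) = Sᶜ := by
      ext j
      simp only [hS, Finset.mem_filter, Finset.mem_univ, true_and, Finset.mem_compl, Fin.ext_iff]
      have := (π (e.symm j).1).isLt
      omega
    rw [hc] at h1
    have hk := key S
    have c0 : k ≤ S.card := by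
      by_contra h
      have := hsmall S (by omega)
      omega
    have c1 : k ≤ Sᶜ.card := by
      by_contra h
      have := hsmall Sᶜ (by omega)
      omega
    have := Finset.card_add_card_compl S
    rw [Fintype.card_fin] at this
    exact ⟨S, by omega, by omega⟩
  · rintro ⟨S, -, hS⟩
    refine ⟨fun v => if h : v ≠ I.hub then (if e ⟨v, h⟩ ∈ S then ⟨0, hn0⟩ else ⟨1, hn1⟩)
      else ⟨0, hn0⟩, fun i => ?_⟩
    have hk := key S
    have hv : ∀ j, (if h : (e.symm j).1 ≠ I.hub then
        (if e ⟨(e.symm j).1, h⟩ ∈ S then (⟨0, hn0⟩ : Fin I.n) else ⟨1, hn1⟩)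
        else ⟨0, hn0⟩) = if j ∈ S then ⟨0, hn0⟩ else ⟨1, hn1⟩ := by
      intro j
      rw [dif_pos (e.symm j).2]
      simp
    simp only [hv]
    have hi : i = ⟨0, hn0⟩ ∨ i = ⟨1, hn1⟩ := by
      simp only [Fin.ext_iff]
      have := i.isLt
      omega
    rcases hi with rfl | rfl
    · have : Finset.univ.filter (fun j => (if j ∈ S then (⟨0, hn0⟩ : Fin I.n) else ⟨1, hn1⟩)
          = ⟨0, hn0⟩) = S := by
        ext j
        by_cases h : j ∈ S <;> simp [h]
      rw [this]; omega
    · have : Finset.univ.filter (fun j => (if j ∈ S then (⟨0, hn0⟩ : Fin I.n) else ⟨1, hn1⟩)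
          = ⟨1, hn1⟩) = Sᶜ := by
        ext j
        by_cases h : j ∈ S <;> simp [h]
      rw [this]; omega
end

section
/- There exists a delivery instance (an unweighted path on four vertices u, h', b, v with the hub placed at h', the unique neighbor of the leaf u, and two agents) such that the set of envy-free allocations is nonempty and the set of non-wasteful allocations is nonempty, but no allocation is both envy-free and non-wasteful. -/
/-- Parent map of the path: hub `0`, `u = 1`, `b = 2`, `v = 3`. -/
def exPar : Fin 4 → Fin 4 := ![0, 0, 0, 2]

/-- The example instance. -/
noncomputable def exI : DeliveryInstance where
  V := Fin 4
  fintypeV := inferInstance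
  decEqV := inferInstance
  hub := 0
  par := exPar
  w := fun _ => 1
  par_hub := rfl
  reaches_hub := fun v => ⟨2, by revert v; decide⟩
  w_pos := fun _ _ => one_pos
  n := 2
  n_pos := two_pos

theorem exAnc (x y : Fin 4) :
    exI.Anc x y ↔ (y = x ∨ exPar y = x ∨ x = 0) := by
  constructor
  · rintro ⟨k, hk⟩
    change exPar^[k] y = x at hk
    match k, hk with
    | 0, hk => exact Or.inl hk
    | 1, hk => exact Or.inr (Or.inl hk)
    | k + 2, hk =>
      right; right
      rw [Function.iterate_add_apply] at hk
      have h2 : exPar^[2] y = 0 := (by decide : ∀ y : Fin 4, exPar^[2] y = 0) y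
      rw [h2, Function.iterate_fixed (by decide)] at hk
      exact hk.symm
  · rintro (h | h | h)
    · exact ⟨0, h⟩
    · exact ⟨1, h⟩
    · refine ⟨2, ?_⟩
      change exPar^[2] y = x
      subst h
      revert y; decide

open Classical in
theorem exCost (p : Fin 4 → Fin 2) (i : Fin 2) :
    exI.cost (exI.bundle p i) =
      (if p 1 = i then 1 else 0) + (if p 2 = i ∨ p 3 = i then 1 else 0)
        + (if p 3 = i then 1 else 0) := by
  have key : ∀ x : Fin 4, (x ≠ 0 ∧ ∃ v ∈ exI.bundle p i, exI.Anc x v) ↔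
      (x ≠ 0 ∧ ∃ v : Fin 4, (v ≠ 0 ∧ p v = i) ∧ (v = x ∨ exPar v = x ∨ x = 0)) := by
    intro x
    refine and_congr_right fun _ => ?_
    exact exists_congr fun v => and_congr Iff.rfl (exAnc x v)
  have h : exI.cost (exI.bundle p i) = ∑ x : Fin 4,
      (if (x ≠ 0 ∧ ∃ v ∈ exI.bundle p i, exI.Anc x v) then (1 : ℝ) else 0) := by
    unfold DeliveryInstance.cost
    refine Finset.sum_congr rfl fun x _ => ?_
    rw [Set.indicator_apply]
    rfl
  rw [h]
  simp only [key]
  rw [Fin.sum_univ_four]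
  simp [Fin.exists_fin_succ, exPar]

theorem exLeaf (l : Fin 4) (h : exI.IsLeaf l) : l = 1 ∨ l = 3 := by
  have hl : ∀ u : Fin 4, exPar u = l → u = l := h
  clear h
  revert l; decide

/-- There is an unweighted two-agent instance whose topology
is a path on four vertices `u, h', b, v` with the hub at `h'` (the unique
neighbor of the leaf `u`), such that envy-free allocations exist and
non-wasteful allocations exist, but no allocation is both. -/
theorem stmt17 :
    ∃ (I : DeliveryInstance) (u b v : I.V),
      I.Unweighted ∧ I.n = 2 ∧
      u ≠ I.hub ∧ b ≠ I.hub ∧ v ≠ I.hub ∧ u ≠ b ∧ u ≠ v ∧ b ≠ v ∧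
      (∀ x : I.V, x = I.hub ∨ x = u ∨ x = b ∨ x = v) ∧
      I.par u = I.hub ∧ I.par b = I.hub ∧ I.par v = b ∧
      (∃ π : I.V → Fin I.n, I.EF π) ∧
      (∃ π : I.V → Fin I.n, I.NonWasteful π) ∧
      ¬ ∃ π : I.V → Fin I.n, I.EF π ∧ I.NonWasteful π := by
  refine ⟨exI, (1 : Fin 4), (2 : Fin 4), (3 : Fin 4), fun _ _ => rfl, rfl,
    (by decide : (1 : Fin 4) ≠ 0), (by decide : (2 : Fin 4) ≠ 0), (by decide : (3 : Fin 4) ≠ 0),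
    (by decide : (1 : Fin 4) ≠ 2), (by decide : (1 : Fin 4) ≠ 3), (by decide : (2 : Fin 4) ≠ 3),
    (by decide : ∀ x : Fin 4, x = 0 ∨ x = 1 ∨ x = 2 ∨ x = 3), rfl, rfl, rfl, ?_, ?_, ?_⟩
  · refine ⟨(![0, 0, 0, 1] : Fin 4 → Fin 2), ?_⟩
    have h : ∀ i : Fin 2, exI.cost (exI.bundle (![0, 0, 0, 1] : Fin 4 → Fin 2) i) = 2 := by
      intro i
      rw [exCost]
      change (if (0 : Fin 2) = i then (1 : ℝ) else 0)
        + (if (0 : Fin 2) = i ∨ (1 : Fin 2) = i then 1 else 0)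
        + (if (1 : Fin 2) = i then 1 else 0) = 2
      fin_cases i <;> norm_num
    intro i j
    exact ((h i).trans (h j).symm).le
  · refine ⟨fun _ => (0 : Fin 2), ?_⟩
    intro v hv
    have h : ∀ v : Fin 4, v ≠ 0 → ∃ l : Fin 4, (∀ u : Fin 4, exPar u = l → u = l) ∧
        (l = v ∨ exPar l = v ∨ v = 0) := by decide
    obtain ⟨l, h1, h2⟩ := h v hv
    exact ⟨l, h1, (exAnc v l).2 h2, rfl⟩
  · rintro ⟨p, hE, hN⟩
    change Fin 4 → Fin 2 at p
    have h32 : p 3 = p 2 := by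
      obtain ⟨l, h1, h2, h3⟩ := hN (2 : Fin 4) (by decide : (2 : Fin 4) ≠ 0)
      have hanc := (exAnc _ _).1 h2
      rcases exLeaf l h1 with rfl | rfl
      · exact absurd hanc (by decide)
      · exact h3
    have e := hE (p 3) (p 3 + 1 : Fin 2)
    rw [exCost, exCost, h32] at e
    generalize p 1 = a at e
    generalize p 2 = c at e
    fin_cases a <;> fin_cases c <;> norm_num at e
    split_ifs at e <;> norm_num at e
end

section
/- There exists a delivery instance (an unweighted path on five vertices u, h', b, v, w with the hub placed at h', the unique neighbor of the leaf u, and two agents) such that the set of EF1 allocations is nonempty and the set of non-wasteful allocations is nonempty, but no allocation is both EF1 and non-wasteful. -/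
/-- The five-vertex path: hub `0`, `u = 1`, `b = 2`, `v = 3`, `w = 4`. -/
def pathPar : Fin 5 → Fin 5 := ![0, 0, 0, 2, 3]

theorem pathPar_anc (u v : Fin 5) :
    (∃ k : ℕ, pathPar^[k] v = u) ↔
      (v = u ∨ u = 0 ∨ (u = 2 ∧ (v = 3 ∨ v = 4)) ∨ (u = 3 ∧ v = 4)) := by
  constructor
  · rintro ⟨k, rfl⟩
    induction k with
    | zero => left; rfl
    | succ k ih =>
      rw [Function.iterate_succ_apply']
      generalize pathPar^[k] v = x at ih
      revert x v
      decide
  · intro h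
    have : ∃ k ∈ Finset.range 4, pathPar^[k] v = u := by
      revert u v
      decide
    obtain ⟨k, -, hk⟩ := this
    exact ⟨k, hk⟩

/-- The unweighted two-agent instance on the five-vertex path. -/
noncomputable abbrev pathInst : DeliveryInstance where
  V := Fin 5
  fintypeV := inferInstance
  decEqV := inferInstance
  hub := 0
  par := pathPar
  w := fun _ => 1
  par_hub := rfl
  reaches_hub := fun v => (pathPar_anc 0 v).2 (by simp)
  w_pos := fun _ _ => one_pos
  n := 2
  n_pos := two_pos

theorem pathInst_anc (u v : Fin 5) : pathInst.Anc u v ↔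
    (v = u ∨ u = 0 ∨ (u = 2 ∧ (v = 3 ∨ v = 4)) ∨ (u = 3 ∧ v = 4)) := pathPar_anc u v

open Classical in
theorem pathInst_cost (A : Set (Fin 5)) : pathInst.cost A =
    (if 1 ∈ A then 1 else 0) + (if 2 ∈ A ∨ 3 ∈ A ∨ 4 ∈ A then 1 else 0)
      + (if 3 ∈ A ∨ 4 ∈ A then 1 else 0) + (if 4 ∈ A then 1 else 0) := by
  have h : pathInst.cost A = ∑ u : Fin 5,
      Set.indicator {u : Fin 5 | u ≠ 0 ∧ ∃ v ∈ A, pathInst.Anc u v} (fun _ => (1 : ℝ)) u := rfl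
  rw [h]
  simp only [Fin.sum_univ_five, Set.indicator_apply, Set.mem_ofPred_eq, pathInst_anc]
  simp [and_or_left, exists_or]

open Classical in
theorem pathInst_cost_of (A : Set (Fin 5)) (p : Fin 5 → Prop) (hA : ∀ x, x ∈ A ↔ p x) :
    pathInst.cost A = (if p 1 then 1 else 0) + (if p 2 ∨ p 3 ∨ p 4 then 1 else 0)
      + (if p 3 ∨ p 4 then 1 else 0) + (if p 4 then 1 else 0) := by
  rw [pathInst_cost]
  simp only [hA]

theorem pathInst_mem (π : Fin 5 → Fin 2) (i : Fin 2) (x : Fin 5) :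
    x ∈ pathInst.bundle π i ↔ x ≠ 0 ∧ π x = i := Iff.rfl

open Classical in
theorem pathInst_cost_bundle (π : Fin 5 → Fin 2) (i : Fin 2) :
    pathInst.cost (pathInst.bundle π i) = (if π 1 = i then 1 else 0)
      + (if π 2 = i ∨ π 3 = i ∨ π 4 = i then 1 else 0)
      + (if π 3 = i ∨ π 4 = i then 1 else 0) + (if π 4 = i then 1 else 0) := by
  rw [pathInst_cost_of _ (fun x => x ≠ 0 ∧ π x = i) (fun x => pathInst_mem π i x)]
  simp

open Classical in
theorem pathInst_cost_diff (π : Fin 5 → Fin 2) (i : Fin 2) (x : Fin 5) :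
    pathInst.cost (pathInst.bundle π i \ {x}) = (if π 1 = i ∧ 1 ≠ x then 1 else 0)
      + (if (π 2 = i ∧ 2 ≠ x) ∨ (π 3 = i ∧ 3 ≠ x) ∨ (π 4 = i ∧ 4 ≠ x) then 1 else 0)
      + (if (π 3 = i ∧ 3 ≠ x) ∨ (π 4 = i ∧ 4 ≠ x) then 1 else 0)
      + (if π 4 = i ∧ 4 ≠ x then 1 else 0) := by
  rw [pathInst_cost_of _ (fun y => (y ≠ 0 ∧ π y = i) ∧ y ≠ x) (fun y => Iff.rfl : ∀ y : Fin 5, y ∈ pathInst.bundle π i \ {x} ↔ _)]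
  simp

theorem pathInst_leaf (l : Fin 5) : pathInst.IsLeaf l ↔ l = 1 ∨ l = 4 := by
  change (∀ u : Fin 5, pathPar u = l → u = l) ↔ _
  revert l
  decide

theorem pathInst_ef1 : pathInst.EF1 (![0, 0, 1, 0, 1] : Fin 5 → Fin 2) := by
  have p1 : (![0, 0, 1, 0, 1] : Fin 5 → Fin 2) 1 = 0 := rfl
  have p2 : (![0, 0, 1, 0, 1] : Fin 5 → Fin 2) 2 = 1 := rfl
  have p3 : (![0, 0, 1, 0, 1] : Fin 5 → Fin 2) 3 = 0 := rfl
  have p4 : (![0, 0, 1, 0, 1] : Fin 5 → Fin 2) 4 = 1 := rfl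
  generalize (![0, 0, 1, 0, 1] : Fin 5 → Fin 2) = π at *
  intro i j
  right
  have hi : i = 0 ∨ i = 1 := by revert i; decide
  have hj : j = 0 ∨ j = 1 := by revert j; decide
  rcases hi with rfl | rfl
  · refine ⟨(1 : Fin 5), (pathInst_mem _ _ _).2 ⟨by decide, by assumption⟩, ?_⟩
    rw [pathInst_cost_diff, pathInst_cost_bundle]
    rcases hj with rfl | rfl <;> rw [p1, p2, p3, p4] <;> norm_num [show ¬ (2 : Fin 5) = 1 by decide, show ¬ (3 : Fin 5) = 1 by decide,
      show ¬ (2 : Fin 5) = 4 by decide, show ¬ (3 : Fin 5) = 4 by decide]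
  · refine ⟨(4 : Fin 5), (pathInst_mem _ _ _).2 ⟨by decide, by assumption⟩, ?_⟩
    rw [pathInst_cost_diff, pathInst_cost_bundle]
    rcases hj with rfl | rfl <;> rw [p1, p2, p3, p4] <;> norm_num [show ¬ (2 : Fin 5) = 1 by decide, show ¬ (3 : Fin 5) = 1 by decide,
      show ¬ (2 : Fin 5) = 4 by decide, show ¬ (3 : Fin 5) = 4 by decide]

theorem pathInst_nonWasteful : pathInst.NonWasteful (fun _ => (0 : Fin 2)) := by
  intro v hv
  have : ∃ l : Fin 5, (l = 1 ∨ l = 4) ∧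
      (l = v ∨ v = 0 ∨ (v = 2 ∧ (l = 3 ∨ l = 4)) ∨ (v = 3 ∧ l = 4)) := by
    clear hv
    revert v
    decide
  obtain ⟨l, h1, h2⟩ := this
  exact ⟨l, (pathInst_leaf l).2 h1, (pathInst_anc v l).2 h2, rfl⟩

theorem pathInst_not_both (π : Fin 5 → Fin 2) (hE : pathInst.EF1 π)
    (hN : pathInst.NonWasteful π) : False := by
  have h2 : π 2 = π 4 := by
    obtain ⟨l, hl, ha, hp⟩ := hN (2 : Fin 5) (by decide)
    rw [pathInst_leaf] at hl
    rw [pathInst_anc] at ha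
    rcases hl with rfl | rfl
    · simp at ha
    · exact hp.symm
  have h3 : π 3 = π 4 := by
    obtain ⟨l, hl, ha, hp⟩ := hN (3 : Fin 5) (by decide)
    rw [pathInst_leaf] at hl
    rw [pathInst_anc] at ha
    rcases hl with rfl | rfl
    · simp at ha
    · exact hp.symm
  obtain ⟨j, hj⟩ : ∃ j : Fin 2, π 4 ≠ j := by
    generalize π 4 = i
    revert i
    decide
  rcases hE (π 4) j with h | ⟨x, hx, hc⟩
  · have : (4 : Fin 5) ∈ pathInst.bundle π (π 4) := (pathInst_mem _ _ _).2 (by simp)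
    rw [h] at this
    exact this
  · rw [pathInst_cost_diff, pathInst_cost_bundle] at hc
    have hx' : x = (1 : Fin 5) ∨ x = (2 : Fin 5) ∨ x = (3 : Fin 5) ∨ x = (4 : Fin 5) := by
      have h0 : x ≠ (0 : Fin 5) := hx.1
      clear hc hx
      revert x
      decide
    by_cases h1 : π 1 = j
    · rcases hx' with rfl | rfl | rfl | rfl <;>
        simp [h2, h3, hj, h1, hj.symm] at hc <;> linarith
    · rcases hx' with rfl | rfl | rfl | rfl <;>
        simp [h2, h3, hj, h1] at hc <;> (try split_ifs at hc) <;> linarith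

/-- There is an unweighted two-agent instance whose topology
is a path on five vertices `u, h', b, v, w` with the hub at `h'` (the unique
neighbor of the leaf `u`), such that EF1 allocations exist and non-wasteful
allocations exist, but no allocation is both. -/
theorem stmt18 :
    ∃ (I : DeliveryInstance) (u b v w : I.V),
      I.Unweighted ∧ I.n = 2 ∧
      u ≠ I.hub ∧ b ≠ I.hub ∧ v ≠ I.hub ∧ w ≠ I.hub ∧
      u ≠ b ∧ u ≠ v ∧ u ≠ w ∧ b ≠ v ∧ b ≠ w ∧ v ≠ w ∧
      (∀ x : I.V, x = I.hub ∨ x = u ∨ x = b ∨ x = v ∨ x = w) ∧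
      I.par u = I.hub ∧ I.par b = I.hub ∧ I.par v = b ∧ I.par w = v ∧
      (∃ π : I.V → Fin I.n, I.EF1 π) ∧
      (∃ π : I.V → Fin I.n, I.NonWasteful π) ∧
      ¬ ∃ π : I.V → Fin I.n, I.EF1 π ∧ I.NonWasteful π := by
  refine ⟨pathInst, (1 : Fin 5), (2 : Fin 5), (3 : Fin 5), (4 : Fin 5), fun _ _ => rfl, rfl,
    by decide, by decide, by decide, by decide, by decide, by decide, by decide, by decide,
    by decide, by decide, ?_, rfl, rfl, rfl, rfl, ⟨_, pathInst_ef1⟩, ⟨_, pathInst_nonWasteful⟩, ?_⟩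
  · change ∀ x : Fin 5, x = 0 ∨ x = 1 ∨ x = 2 ∨ x = 3 ∨ x = 4
    decide
  · rintro ⟨π, hE, hN⟩
    exact pathInst_not_both π hE hN
end
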